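/- Let e ∈ S^d, a ∈ (0,π/2), ε ∈ (0,1], and let K ∈ 𝒦̄_s^d satisfy e ∈ K ⊆ H_e^+, r_e(K) ≥ a and R_e(K) − r_e(K) ≥ ε. Then Ũ_e(K) ≥ [1 + c(a,d)·ε^{(d+1)/2}]·Ũ_e(B(e,a)), where c(a,d) can be taken ≥ (2π)^{−2d}·a^{−1}·(min{a, π/2 − a})^{d−1}. -/

import Mathlib

open Real MeasureTheory Filter
open scoped RealInnerProductSpace ENNReal NNReal Topology

noncomputable section

/-- The ambient Euclidean space `ℝ^{d+1}`. -/
abbrev Esp (d : ℕ) : Type := EuclideanSpace ℝ (Fin (d + 1))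

/-- The unit sphere `S^d ⊂ ℝ^{d+1}`. -/
def uSphere (d : ℕ) : Set (Esp d) := Metric.sphere 0 1

/-- The spherical Lebesgue measure `σ_d` (d-dimensional Hausdorff measure restricted
to the unit sphere). -/
def sigmaMeas (d : ℕ) : Measure (Esp d) := (μH[(d : ℝ)]).restrict (uSphere d)

/-- `ω_{d+1} = σ_d(S^d)`, the total surface area of the unit sphere in `ℝ^{d+1}`. -/
def omegaTot (d : ℕ) : ℝ := (sigmaMeas d (uSphere d)).toReal

/-- `ω_d`, the `(d-1)`-dimensional measure of the unit sphere `S^{d-1} ⊂ ℝ^d`. -/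
def omegaSm (d : ℕ) : ℝ :=
  (μH[((d : ℝ) - 1)] (Metric.sphere (0 : EuclideanSpace ℝ (Fin d)) 1)).toReal

/-- `κ_d`, the volume of the unit ball in `ℝ^d`. -/
def kappaVol (d : ℕ) : ℝ :=
  (volume (Metric.ball (0 : EuclideanSpace ℝ (Fin d)) 1)).toReal

/-- The geodesic (angular) distance `d_s(x,y) = arccos ⟨x,y⟩` on the unit sphere. -/
def geo {d : ℕ} (x y : Esp d) : ℝ := Real.arccos ⟪x, y⟫

/-- The spherical ball (cap) `B(e,α)` of radius `α` centred at `e`. -/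
def cap {d : ℕ} (e : Esp d) (α : ℝ) : Set (Esp d) := {x ∈ uSphere d | geo x e ≤ α}

/-- `K ∈ 𝒦̄_s^d`: a spherically convex body, i.e. the intersection of the unit sphere
with a closed convex cone `C ≠ {0}` which is not a linear subspace. -/
def IsSphConvBody (d : ℕ) (K : Set (Esp d)) : Prop :=
  ∃ C : Set (Esp d), IsClosed C ∧ Convex ℝ C ∧
    (∀ x ∈ C, ∀ t : ℝ, 0 ≤ t → t • x ∈ C) ∧
    C ≠ {0} ∧ (∀ L : Submodule ℝ (Esp d), C ≠ (L : Set (Esp d))) ∧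
    K = C ∩ uSphere d

/-- `K ∈ 𝒦_s^d`: a proper spherically convex body, i.e. the intersection of the unit
sphere with a line-free closed convex cone `C ≠ {0}`. -/
def IsProperSphConvBody (d : ℕ) (K : Set (Esp d)) : Prop :=
  ∃ C : Set (Esp d), IsClosed C ∧ Convex ℝ C ∧
    (∀ x ∈ C, ∀ t : ℝ, 0 ≤ t → t • x ∈ C) ∧
    C ≠ {0} ∧ (∀ x ∈ C, x ≠ 0 → -x ∉ C) ∧
    K = C ∩ uSphere d

/-- The spherical mean width functional
`U₁(K) = (1/(2 ω_{d+1})) σ_d({x ∈ S^d : x^⊥ ∩ K ≠ ∅})`. -/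
def U1 (d : ℕ) (K : Set (Esp d)) : ℝ :=
  (1 / (2 * omegaTot d)) * (sigmaMeas d {x | ∃ y ∈ K, ⟪x, y⟫ = 0}).toReal

/-- `D(x) = ∫₀^x sin^{d-1} t dt`. -/
def Dfun (d : ℕ) (x : ℝ) : ℝ := ∫ t in (0:ℝ)..x, Real.sin t ^ (d - 1)

/-- `S_e = S^d ∩ e^⊥`, the great subsphere orthogonal to `e`. -/
def equator {d : ℕ} (e : Esp d) : Set (Esp d) := uSphere d ∩ {x | ⟪x, e⟫ = 0}

/-- The rotation invariant probability measure `σ⁰_{d-1}` on the great subsphere `S_e`. -/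
def sigma0 (d : ℕ) (e : Esp d) : Measure (Esp d) :=
  (μH[((d : ℝ) - 1)] (equator e))⁻¹ • (μH[((d : ℝ) - 1)]).restrict (equator e)

/-- The spherical radial function `α_{K,e}(u)`: the geodesic distance from `e` to the
boundary of `K` along the great circle through `e` in direction `u ∈ S_e`. -/
def sphRadial {d : ℕ} (K : Set (Esp d)) (e u : Esp d) : ℝ :=
  sSup {t : ℝ | 0 ≤ t ∧ t ≤ π / 2 ∧ (Real.cos t) • e + (Real.sin t) • u ∈ K}

/-- The set `-int(K*)`: points `e` of the sphere such that `K` is contained in the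
open hemisphere centred at `e`. -/
def negIntPolar (d : ℕ) (K : Set (Esp d)) : Set (Esp d) :=
  {e ∈ uSphere d | ∀ x ∈ K, 0 < ⟪e, x⟫}

/-- Points `e` of the sphere such that `K ⊆ {x : ⟨x,e⟩ ≥ 0}` (closed hemisphere). -/
def hemiCenters (d : ℕ) (K : Set (Esp d)) : Set (Esp d) :=
  {e ∈ uSphere d | ∀ x ∈ K, 0 ≤ ⟪x, e⟫}

/-- The `σ⁰_{d-1}`-average of `D ∘ α_{K,e}` over `S_e`. -/
def avgD (d : ℕ) (K : Set (Esp d)) (e : Esp d) : ℝ :=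
  ∫ u, Dfun d (sphRadial K e u) ∂(sigma0 d e)

/-- The `L²(S_e, σ⁰_{d-1})`-deviation of `D ∘ α_{K,e}` from its average. -/
def L2dev (d : ℕ) (K : Set (Esp d)) (e : Esp d) : ℝ :=
  Real.sqrt (∫ u, (Dfun d (sphRadial K e u) - avgD d K e) ^ 2 ∂(sigma0 d e))

/-- `Δ₂(K)`: infimum of the `L²` deviations over `e ∈ -int(K*)`. -/
def Delta2 (d : ℕ) (K : Set (Esp d)) : ℝ :=
  sInf (L2dev d K '' negIntPolar d K)

/-- `Δ₂*(K)`: infimum of the `L²` deviations over all `e` with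
`K ⊆ {x : ⟨x,e⟩ ≥ 0}`. -/
def Delta2Star (d : ℕ) (K : Set (Esp d)) : ℝ :=
  sInf (L2dev d K '' hemiCenters d K)

/-- The centred spherical inradius `r_e(K) = max{r ≥ 0 : B(e,r) ⊆ K}`. -/
def rcent (d : ℕ) (K : Set (Esp d)) (e : Esp d) : ℝ :=
  sSup {r : ℝ | 0 ≤ r ∧ cap e r ⊆ K}

/-- The centred spherical circumradius `R_e(K) = min{r ≥ 0 : K ⊆ B(e,r)}`. -/
def Rcent (d : ℕ) (K : Set (Esp d)) (e : Esp d) : ℝ :=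
  sInf {r : ℝ | 0 ≤ r ∧ K ⊆ cap e r}

/-- The spherical inradius `Σ_r(K) = max{r_e(K) : e ∈ K}`. -/
def SigmaR (d : ℕ) (K : Set (Esp d)) : ℝ :=
  sSup (rcent d K '' K)

/-- The deviation functional `ϑ_r(K) = min{R_e(K) - r_e(K) : e ∈ K, r_e(K) = Σ_r(K)}`. -/
def thetaR (d : ℕ) (K : Set (Esp d)) : ℝ :=
  sInf ((fun e => Rcent d K e - rcent d K e) '' {e ∈ K | rcent d K e = SigmaR d K})

/-- `Ũ_e(K) = σ_d({x ∈ S^d : (x-e)^⊥ ∩ K ≠ ∅})`. -/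
def Utilde (d : ℕ) (e : Esp d) (K : Set (Esp d)) : ℝ :=
  (sigmaMeas d {x | ∃ y ∈ K, ⟪x - e, y⟫ = 0}).toReal

/-- The spherical Hausdorff distance `δ_s`, based on the geodesic metric. -/
def sphHausdorff (d : ℕ) (K L : Set (Esp d)) : ℝ :=
  max (⨆ x ∈ K, ⨅ y ∈ L, geo x y) (⨆ y ∈ L, ⨅ x ∈ K, geo x y)

/-- Continuity of a functional on `𝒦̄_s^d` with respect to the spherical Hausdorff
metric `δ_s`. -/
def SphContinuous (d : ℕ) (F : Set (Esp d) → ℝ) : Prop :=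
  ∀ K, IsSphConvBody d K → ∀ ε > (0:ℝ), ∃ δ > (0:ℝ), ∀ L, IsSphConvBody d L →
    sphHausdorff d K L < δ → |F K - F L| < ε

/-- A hitting functional: continuous, nonnegative, vanishing exactly on one-pointed
sets. -/
def IsHittingFunctional (d : ℕ) (Φ : Set (Esp d) → ℝ) : Prop :=
  SphContinuous d Φ ∧ (∀ K, IsSphConvBody d K → 0 ≤ Φ K) ∧
    (∀ K, IsSphConvBody d K → (Φ K = 0 ↔ ∃ p, K = {p}))

/-- A size functional: continuous, nonnegative, not identically zero, vanishing on
one-pointed sets. -/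
def IsSizeFunctional (d : ℕ) (S : Set (Esp d) → ℝ) : Prop :=
  SphContinuous d S ∧ (∀ K, IsSphConvBody d K → 0 ≤ S K) ∧
    (∃ K, IsSphConvBody d K ∧ S K ≠ 0) ∧
    (∀ p ∈ uSphere d, S ({p} : Set (Esp d)) = 0)

/-- The isoperimetric constant `τ(Φ,Σ,a) = inf{Φ(K) : K ∈ 𝒦̄_s^d, Σ(K) ≥ a}`. -/
def tauConst (d : ℕ) (Φ S : Set (Esp d) → ℝ) (a : ℝ) : ℝ :=
  sInf (Φ '' {K | IsSphConvBody d K ∧ a ≤ S K})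

/-- The spherical convex hull of a set `V ⊆ S^d`: the intersection of the sphere with
the closed convex cone generated by `V`. -/
def sphConvHull (d : ℕ) (V : Set (Esp d)) : Set (Esp d) :=
  {x ∈ uSphere d | ∃ y ∈ convexHull ℝ V, ∃ t : ℝ, 0 < t ∧ x = t • y}

/-- A spherical polytope: the intersection of the sphere with a finitely generated
(polyhedral) cone, which is also a spherically convex body. -/
def IsSphPolytope (d : ℕ) (P : Set (Esp d)) : Prop :=
  IsSphConvBody d P ∧ ∃ V : Finset (Esp d),
    (V : Set (Esp d)) ⊆ uSphere d ∧ P = sphConvHull d (V : Set (Esp d))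

/-- The vertices (extreme points) of a spherical polytope. -/
def sphExtremePoints (d : ℕ) (P : Set (Esp d)) : Set (Esp d) :=
  {x ∈ P | x ∉ sphConvHull d (P \ {x})}

/-- The boundary of `K` relative to the sphere. -/
def sphFrontier (d : ℕ) (K : Set (Esp d)) : Set (Esp d) :=
  {x ∈ K | ∀ ε > (0:ℝ), ∃ y ∈ uSphere d, y ∉ K ∧ dist y x < ε}

/-- The functions `h_m(t) = (-1)^{m+1} e^{-t} + 2 ∑_{i=0}^{⌊m/2⌋} t^{m-2i}/(m-2i)!`. -/
def hFun (m : ℕ) (t : ℝ) : ℝ :=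
  (-1 : ℝ) ^ (m + 1) * Real.exp (-t) +
    2 * ∑ i ∈ Finset.range (m / 2 + 1), t ^ (m - 2 * i) / (Nat.factorial (m - 2 * i) : ℝ)

/-! The hyperplane `(x - e)^⊥` meets the cap `B(e,a)` only if `x` is within distance `2a` of `e`.
Since the exponential map of the sphere is a contraction, `Ũ_e(B(e,a)) ≤ σ_d(B(e,2a)) ≤ (2a)^d κ_d`.

If `R_e(K) - r_e(K) ≥ ε`, then `K` contains a point `y` at distance more than `r = a + ε/2` from
`e`, in some direction `v`. Project stereographically from `-e`. The points whose hyperplane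
separates `e` from `y` cover the ball with diameter `[0, tan r • v]`, whereas `B(e,2a)` becomes the
ball of radius `tan a` about `0`. The part of the first ball outside the second contains a spheroid
with semi-axes of order `ε` along `v` and `√ε` across, hence of volume of order
`ε √ε^(d-1) = ε^((d+1)/2)`. Stereographic projection is an inversion of the ambient space, so going
back to the sphere scales lengths there by at least `2 cos² r`.
-/

section HittingSet

variable {V : Type*} [NormedAddCommGroup V] [InnerProductSpace ℝ V] {e x y : V}

/-- The points `x` whose hyperplane `(x - e)^⊥` meets `K`; for unit vectors `x` and `e` this
hyperplane is the bisector of `x` and `e`. By definition `Ũ_e(K)` is the spherical measure of this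
set. -/
def hittingSet (e : V) (K : Set V) : Set V := {x | ∃ y ∈ K, ⟪x - e, y⟫ = 0}

lemma hittingSet_mono {K L : Set V} (h : K ⊆ L) : hittingSet e K ⊆ hittingSet e L :=
  fun _ ⟨y, hy, hxy⟩ => ⟨y, h hy, hxy⟩

lemma angle_le_two_mul_angle_of_inner_sub_eq_zero (hxe : ‖x‖ = ‖e‖) (h : ⟪x - e, y⟫ = 0) :
    InnerProductGeometry.angle x e ≤ 2 * InnerProductGeometry.angle y e := by
  have hxy : InnerProductGeometry.angle x y = InnerProductGeometry.angle y e := by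
    rw [inner_sub_left, sub_eq_zero] at h
    rw [InnerProductGeometry.angle_comm y e, InnerProductGeometry.angle,
      InnerProductGeometry.angle, h, hxe]
  linarith [InnerProductGeometry.angle_le_angle_add_angle x y e]

/-- The hyperplane `(x - e)^⊥` separates `e` from `y`, hence meets the geodesic between them. -/
lemma mem_hittingSet_of_inner_nonneg {C : Set V} (hconv : Convex ℝ C)
    (hcone : ∀ x ∈ C, ∀ t : ℝ, 0 ≤ t → t • x ∈ C) (heC : e ∈ C) (he : ‖e‖ = 1) (hyC : y ∈ C)
    (hy : ‖y‖ = 1) (hye : 0 ≤ ⟪y, e⟫) (hxe : ⟪x - e, e⟫ ≤ 0) (hxy : 0 ≤ ⟪x - e, y⟫) :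
    x ∈ hittingSet e (C ∩ Metric.sphere 0 1) := by
  rcases hxy.eq_or_lt with h | hpos
  · exact ⟨y, ⟨hyC, by simpa using hy⟩, h.symm⟩
  set w := ⟪x - e, y⟫ • e + (-⟪x - e, e⟫) • y with hw
  have hwC : w ∈ C := by
    have hsum : 0 < ⟪x - e, y⟫ + -⟪x - e, e⟫ := by linarith
    have := hcone _ (hconv heC hyC (div_nonneg hxy hsum.le)
      (div_nonneg (neg_nonneg.2 hxe) hsum.le) (by field_simp)) _ hsum.le
    rwa [smul_add, smul_smul, smul_smul, mul_div_cancel₀ _ hsum.ne',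
      mul_div_cancel₀ _ hsum.ne'] at this
  have hw0 : w ≠ 0 := by
    have hwe : 0 < ⟪w, e⟫ := by
      rw [hw, inner_add_left, real_inner_smul_left, real_inner_smul_left,
        real_inner_self_eq_norm_sq, he]
      linarith [mul_nonneg (neg_nonneg.2 hxe) hye]
    rintro h
    simp [h] at hwe
  refine ⟨‖w‖⁻¹ • w, ⟨hcone _ hwC _ (by positivity), ?_⟩, ?_⟩
  · rw [mem_sphere_zero_iff_norm, norm_smul, norm_inv, norm_norm,
      inv_mul_cancel₀ (norm_ne_zero_iff.2 hw0)]
  · rw [real_inner_smul_right, hw, inner_add_right, real_inner_smul_right, real_inner_smul_right]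
    ring

end HittingSet

section ExponentialMap

lemma sinc_mul_self (x : ℝ) : sinc x * x = Real.sin x := by
  rcases eq_or_ne x 0 with rfl | hx
  · simp
  · rw [sinc_of_ne_zero hx, div_mul_cancel₀ _ hx]

variable {V : Type*} [NormedAddCommGroup V] [InnerProductSpace ℝ V] {e p q x : V}

/-- The exponential map of the unit sphere at `e`: for unit `e` and `p ⟂ e`, the endpoint of the
geodesic of length `‖p‖` that starts at `e` in direction `p`. -/
def sphExp (e p : V) : V := Real.cos ‖p‖ • e + sinc ‖p‖ • p

@[fun_prop]
lemma continuous_sphExp (e : V) : Continuous (sphExp e) := by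
  have := continuous_sinc
  unfold sphExp
  fun_prop

lemma inner_sphExp_sphExp (he : ‖e‖ = 1) (hp : ⟪p, e⟫ = 0) (hq : ⟪q, e⟫ = 0) :
    ⟪sphExp e p, sphExp e q⟫ =
      Real.cos ‖p‖ * Real.cos ‖q‖ + sinc ‖p‖ * sinc ‖q‖ * ⟪p, q⟫ := by
  have hq' : ⟪e, q⟫ = 0 := by rw [real_inner_comm, hq]
  simp only [sphExp, inner_add_left, inner_add_right, real_inner_smul_left, real_inner_smul_right,
    real_inner_self_eq_norm_sq, he, hp, hq']
  ring

lemma inner_sphExp_self (he : ‖e‖ = 1) (hp : ⟪p, e⟫ = 0) :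
    ⟪sphExp e p, e⟫ = Real.cos ‖p‖ := by
  simp [sphExp, inner_add_left, real_inner_smul_left, he, hp]

lemma norm_sphExp (he : ‖e‖ = 1) (hp : ⟪p, e⟫ = 0) : ‖sphExp e p‖ = 1 := by
  rw [← sq_eq_sq₀ (norm_nonneg _) zero_le_one, ← real_inner_self_eq_norm_sq,
    inner_sphExp_sphExp he hp hp, real_inner_self_eq_norm_sq, one_pow, ← sin_sq_add_cos_sq ‖p‖,
    ← sinc_mul_self]
  ring

lemma sphExp_smul_of_norm_eq_one (hp : ‖p‖ = 1) {θ : ℝ} (hθ : 0 ≤ θ) :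
    sphExp e (θ • p) = Real.cos θ • e + Real.sin θ • p := by
  rw [sphExp, norm_smul, hp, mul_one, Real.norm_of_nonneg hθ, smul_smul, sinc_mul_self]

lemma norm_sphExp_sub_sphExp_le (he : ‖e‖ = 1) (hp : ⟪p, e⟫ = 0) (hq : ⟪q, e⟫ = 0) :
    ‖sphExp e p - sphExp e q‖ ≤ ‖p - q‖ := by
  rw [← sq_le_sq₀ (norm_nonneg _) (norm_nonneg _), norm_sub_sq_real, norm_sub_sq_real,
    norm_sphExp he hp, norm_sphExp he hq, inner_sphExp_sphExp he hp hq]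
  have hsinc : sinc ‖p‖ * sinc ‖q‖ ≤ 1 := by
    refine (le_abs_self _).trans ?_
    rw [abs_mul]
    exact mul_le_one₀ (abs_sinc_le_one _) (abs_nonneg _) (abs_sinc_le_one _)
  have hcs : (1 - sinc ‖p‖ * sinc ‖q‖) * ⟪p, q⟫ ≤ ‖p‖ * ‖q‖ - Real.sin ‖p‖ * Real.sin ‖q‖ :=
    calc (1 - sinc ‖p‖ * sinc ‖q‖) * ⟪p, q⟫ ≤ (1 - sinc ‖p‖ * sinc ‖q‖) * (‖p‖ * ‖q‖) :=
          mul_le_mul_of_nonneg_left (real_inner_le_norm p q) (sub_nonneg.2 hsinc)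
      _ = ‖p‖ * ‖q‖ - Real.sin ‖p‖ * Real.sin ‖q‖ := by
          rw [← sinc_mul_self ‖p‖, ← sinc_mul_self ‖q‖]; ring
  have hcos := one_sub_sq_div_two_le_cos (x := ‖p‖ - ‖q‖)
  rw [Real.cos_sub] at hcos
  linarith

lemma exists_sphExp_eq (he : ‖e‖ = 1) (hx : ‖x‖ = 1) (hxe : -1 < ⟪x, e⟫) :
    ∃ p, ⟪p, e⟫ = 0 ∧ ‖p‖ = arccos ⟪x, e⟫ ∧ sphExp e p = x := by
  have hcos : Real.cos (arccos ⟪x, e⟫) = ⟪x, e⟫ :=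
    Real.cos_arccos hxe.le (by simpa [hx, he] using real_inner_le_norm x e)
  have hπ : arccos ⟪x, e⟫ < π :=
    lt_of_le_of_ne (arccos_le_pi _) (mt arccos_eq_pi.1 hxe.not_ge)
  set θ := arccos ⟪x, e⟫
  have hθ : 0 ≤ θ := arccos_nonneg _
  have hsin : 0 ≤ Real.sin θ := sin_nonneg_of_nonneg_of_le_pi hθ hπ.le
  have hsinc : 0 < sinc θ := by
    rcases hθ.eq_or_lt with h | h
    · simp [← h]
    · rw [sinc_of_ne_zero h.ne']
      exact div_pos (sin_pos_of_pos_of_lt_pi h hπ) h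
  have hnorm : ‖x - Real.cos θ • e‖ = Real.sin θ := by
    rw [← sq_eq_sq₀ (norm_nonneg _) hsin, norm_sub_sq_real, real_inner_smul_right, norm_smul, he,
      hx, ← hcos, Real.norm_eq_abs, mul_one, sq_abs, Real.sin_sq]
    ring
  have hp : ‖(sinc θ)⁻¹ • (x - Real.cos θ • e)‖ = θ := by
    rw [norm_smul, hnorm, norm_inv, Real.norm_of_nonneg hsinc.le, ← sinc_mul_self,
      inv_mul_cancel_left₀ hsinc.ne']
  refine ⟨(sinc θ)⁻¹ • (x - Real.cos θ • e), ?_, hp, ?_⟩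
  · rw [real_inner_smul_left, inner_sub_left, real_inner_smul_left, real_inner_self_eq_norm_sq, he,
      hcos]
    ring
  · rw [sphExp, hp, smul_inv_smul₀ hsinc.ne', add_sub_cancel]

lemma hausdorffMeasure_sphExp_image_le [MeasurableSpace V] [BorelSpace V] (he : ‖e‖ = 1) {δ : ℝ}
    (hδ : 0 ≤ δ) (s : Set (ℝ ∙ e)ᗮ) :
    μH[δ] ((fun p : (ℝ ∙ e)ᗮ => sphExp e p) '' s) ≤ μH[δ] s := by
  have hLip : LipschitzWith 1 fun p : (ℝ ∙ e)ᗮ => sphExp e p :=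
    LipschitzWith.of_dist_le_mul fun p q => by
      simpa [dist_eq_norm] using norm_sphExp_sub_sphExp_le he
        (Submodule.mem_orthogonal_singleton_iff_inner_left.1 p.2)
        (Submodule.mem_orthogonal_singleton_iff_inner_left.1 q.2)
  simpa using hLip.hausdorffMeasure_image_le hδ s

end ExponentialMap

section Stereographic

variable {V : Type*} [NormedAddCommGroup V] [InnerProductSpace ℝ V] {e p v : V}

/-- The inverse of the stereographic projection of the unit sphere from `-e` onto `e^⊥`, realised
as the inversion of radius `√2` about `-e`. It sends `p` to the point at distance
`2 * arctan ‖p‖` from `e` in direction `p`. -/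
def stereoInv (e p : V) : V := EuclideanGeometry.inversion (-e) (√2) p

lemma dist_neg_sq_of_inner_eq_zero (he : ‖e‖ = 1) (hp : ⟪p, e⟫ = 0) :
    dist p (-e) ^ 2 = 1 + ‖p‖ ^ 2 := by
  rw [dist_eq_norm, sub_neg_eq_add, norm_add_sq_real, hp, he]
  ring

lemma stereoInv_sub_self (he : ‖e‖ = 1) (hp : ⟪p, e⟫ = 0) :
    stereoInv e p - e = (2 / (1 + ‖p‖ ^ 2)) • (p - ‖p‖ ^ 2 • e) := by
  rw [stereoInv, EuclideanGeometry.inversion, div_pow, dist_neg_sq_of_inner_eq_zero he hp,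
    Real.sq_sqrt zero_le_two, vsub_eq_sub, vadd_eq_add]
  have h : 2 / (1 + ‖p‖ ^ 2) * (1 + ‖p‖ ^ 2) = 2 := div_mul_cancel₀ _ (by positivity)
  linear_combination (norm := module) h • e

lemma inner_stereoInv_self (he : ‖e‖ = 1) (hp : ⟪p, e⟫ = 0) :
    ⟪stereoInv e p, e⟫ = 2 / (1 + ‖p‖ ^ 2) - 1 := by
  have h := congrArg (⟪·, e⟫) (stereoInv_sub_self he hp)
  simp only [inner_sub_left, real_inner_smul_left, real_inner_self_eq_norm_sq, he, hp] at h
  rw [sub_eq_iff_eq_add.1 h]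
  field_simp
  ring

lemma norm_stereoInv (he : ‖e‖ = 1) (hp : ⟪p, e⟫ = 0) : ‖stereoInv e p‖ = 1 := by
  rw [← sq_eq_sq₀ (norm_nonneg _) zero_le_one, eq_add_of_sub_eq (stereoInv_sub_self he hp),
    norm_add_sq_real, norm_smul, mul_pow, norm_sub_sq_real, real_inner_smul_left, inner_sub_left,
    real_inner_smul_left, real_inner_smul_right, real_inner_self_eq_norm_sq, norm_smul, mul_pow,
    he, hp, Real.norm_eq_abs, sq_abs, Real.norm_eq_abs, sq_abs]
  field_simp
  ring

lemma two_mul_lt_arccos_inner_stereoInv (he : ‖e‖ = 1) (hp : ⟪p, e⟫ = 0) {a : ℝ} (ha : 0 ≤ a)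
    (ha' : a < π / 2) (hap : Real.tan a < ‖p‖) : 2 * a < arccos ⟪stereoInv e p, e⟫ := by
  have hcos : 0 < Real.cos a := cos_pos_of_mem_Ioo ⟨by linarith, ha'⟩
  have htan : 0 ≤ Real.tan a := tan_nonneg_of_nonneg_of_le_pi_div_two ha ha'.le
  have hlt : ⟪stereoInv e p, e⟫ < Real.cos (2 * a) := by
    rw [inner_stereoInv_self he hp, Real.cos_two_mul, ← Real.inv_one_add_tan_sq hcos.ne',
      ← div_eq_mul_inv]
    gcongr
  rw [← Real.arccos_cos (x := 2 * a) (by linarith) (by linarith)]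
  refine Real.arccos_lt_arccos ?_ hlt (Real.cos_le_one _)
  rw [inner_stereoInv_self he hp]
  linarith [show 0 ≤ 2 / (1 + ‖p‖ ^ 2) by positivity]

/-- In stereographic coordinates, the hyperplanes that separate `e` from the point at distance `θ`
in direction `v` fill the ball with diameter `[0, tan θ • v]`. -/
lemma inner_stereoInv_sub_sphExp_nonneg (he : ‖e‖ = 1) (hp : ⟪p, e⟫ = 0) (hv : ‖v‖ = 1)
    (hve : ⟪v, e⟫ = 0) {r θ : ℝ} (hr : 0 < r) (hr' : r < π / 2) (hrθ : r ≤ θ) (hθ : θ ≤ π / 2)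
    (hpv : ‖p‖ ^ 2 ≤ Real.tan r * ⟪p, v⟫) : 0 ≤ ⟪stereoInv e p - e, sphExp e (θ • v)⟫ := by
  have htan : 0 < Real.tan r := tan_pos_of_pos_of_lt_pi_div_two hr hr'
  have hcos : 0 ≤ Real.cos θ := cos_nonneg_of_mem_Icc ⟨by linarith, hθ⟩
  have hpv0 : 0 ≤ ⟪p, v⟫ := nonneg_of_mul_nonneg_right ((sq_nonneg _).trans hpv) htan
  have hsin : Real.tan r * Real.cos θ ≤ Real.sin θ :=
    calc Real.tan r * Real.cos θ ≤ Real.tan r * Real.cos r := by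
          gcongr
          exact cos_le_cos_of_nonneg_of_le_pi hr.le (by linarith) hrθ
      _ = Real.sin r := tan_mul_cos (cos_pos_of_mem_Ioo ⟨by linarith, hr'⟩).ne'
      _ ≤ Real.sin θ := sin_le_sin_of_le_of_le_pi_div_two (by linarith) hθ hrθ
  have hkey : ‖p‖ ^ 2 * Real.cos θ ≤ Real.sin θ * ⟪p, v⟫ :=
    calc ‖p‖ ^ 2 * Real.cos θ ≤ Real.tan r * ⟪p, v⟫ * Real.cos θ := by gcongr
      _ = Real.tan r * Real.cos θ * ⟪p, v⟫ := by ring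
      _ ≤ Real.sin θ * ⟪p, v⟫ := by gcongr
  have hev : ⟪e, v⟫ = 0 := by rw [real_inner_comm, hve]
  rw [stereoInv_sub_self he hp, sphExp_smul_of_norm_eq_one hv (hr.le.trans hrθ),
    real_inner_smul_left]
  refine mul_nonneg (by positivity) ?_
  simp only [inner_sub_left, inner_add_right, real_inner_smul_left, real_inner_smul_right, hp, hev,
    real_inner_self_eq_norm_sq, he]
  linarith

end Stereographic

section Inversion

lemma hausdorffMeasure_le_inversion_image {V : Type*} [NormedAddCommGroup V]
    [InnerProductSpace ℝ V] [MeasurableSpace V] [BorelSpace V] {c : V} {R ρ δ : ℝ} (hR : R ≠ 0)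
    (hδ : 0 ≤ δ) {s : Set V} (hcs : c ∉ s) (hs : ∀ x ∈ s, dist x c ≤ ρ) :
    μH[δ] s ≤ ENNReal.ofReal (ρ ^ 2 / R ^ 2) ^ δ *
      μH[δ] (EuclideanGeometry.inversion c R '' s) := by
  have hLip : LipschitzOnWith (ρ ^ 2 / R ^ 2).toNNReal (EuclideanGeometry.inversion c R)
      (EuclideanGeometry.inversion c R '' s) := by
    refine LipschitzOnWith.of_dist_le_mul ?_
    rintro _ ⟨x, hx, rfl⟩ _ ⟨y, hy, rfl⟩
    have hx0 : x ≠ c := ne_of_mem_of_not_mem hx hcs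
    have hy0 : y ≠ c := ne_of_mem_of_not_mem hy hcs
    have hdx := dist_pos.2 hx0
    have hdy := dist_pos.2 hy0
    rw [EuclideanGeometry.inversion_inversion _ hR, EuclideanGeometry.inversion_inversion _ hR,
      EuclideanGeometry.dist_inversion_inversion hx0 hy0, Real.coe_toNNReal _ (by positivity)]
    calc dist x y = dist x c * dist y c / R ^ 2 * (R ^ 2 / (dist x c * dist y c) * dist x y) := by
          field_simp
      _ ≤ ρ ^ 2 / R ^ 2 * (R ^ 2 / (dist x c * dist y c) * dist x y) := by
          gcongr
          rw [sq ρ]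
          exact mul_le_mul (hs x hx) (hs y hy) hdy.le (hdx.le.trans (hs x hx))
  rw [ENNReal.ofReal]
  simpa only [Set.image_image, EuclideanGeometry.inversion_inversion _ hR, Set.image_id'] using
    hLip.hausdorffMeasure_image_le hδ

lemma hausdorffMeasure_le_stereoInv_image {V : Type*} [NormedAddCommGroup V]
    [InnerProductSpace ℝ V] [MeasurableSpace V] [BorelSpace V] {e : V} (he : ‖e‖ = 1) {δ M : ℝ}
    (hδ : 0 ≤ δ) {s : Set (ℝ ∙ e)ᗮ} (hs : ∀ p ∈ s, ‖p‖ ≤ M) :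
    μH[δ] s ≤ ENNReal.ofReal ((1 + M ^ 2) / 2) ^ δ *
      μH[δ] ((fun p : (ℝ ∙ e)ᗮ => stereoInv e p) '' s) := by
  have hdist (p : (ℝ ∙ e)ᗮ) : dist (p : V) (-e) ^ 2 = 1 + ‖p‖ ^ 2 :=
    dist_neg_sq_of_inner_eq_zero he (Submodule.mem_orthogonal_singleton_iff_inner_left.1 p.2)
  have hnotMem : -e ∉ ((↑) '' s : Set V) := by
    rintro ⟨p, -, hp⟩
    have := hdist p
    rw [hp, dist_self] at this
    linarith [sq_nonneg ‖p‖]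
  have hle : ∀ x ∈ ((↑) '' s : Set V), dist x (-e) ≤ √(1 + M ^ 2) := by
    rintro _ ⟨p, hp, rfl⟩
    refine Real.le_sqrt_of_sq_le ?_
    rw [hdist p]
    gcongr
    exact hs p hp
  have hmain := hausdorffMeasure_le_inversion_image (R := √2) (by positivity) hδ hnotMem hle
  rwa [isometry_subtype_coe.hausdorffMeasure_image (Or.inl hδ), Set.image_image,
    Real.sq_sqrt (by positivity), Real.sq_sqrt zero_le_two] at hmain

end Inversion

section Spheroid

variable {F : Type*} [NormedAddCommGroup F] [InnerProductSpace ℝ F] {v p : F}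

/-- For a unit vector `v`, the open solid ellipsoid of revolution with centre `c • v`, semi-axis `A`
in direction `v` and semi-axis `ρ` in the directions orthogonal to `v`. -/
def spheroid (v : F) (c A ρ : ℝ) : Set F :=
  (fun w => c • v + (ρ • w + ((A - ρ) * ⟪v, w⟫) • v)) '' Metric.ball 0 1

lemma addHaar_spheroid [FiniteDimensional ℝ F] [MeasurableSpace F] [BorelSpace F] (μ : Measure F)
    [μ.IsAddHaarMeasure] (hv : ‖v‖ = 1) (c : ℝ) {A ρ : ℝ} (hA : 0 ≤ A) (hρ : 0 < ρ) :
    μ (spheroid v c A ρ) =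
      ENNReal.ofReal (A * ρ ^ (Module.finrank ℝ F - 1)) * μ (Metric.ball 0 1) := by
  let L := ρ • LinearMap.transvection ((A / ρ - 1) • (innerSL ℝ v).toLinearMap) v
  have hL : ∀ w, ρ • w + ((A - ρ) * ⟪v, w⟫) • v = L w := by
    intro w
    simp only [L, LinearMap.smul_apply, LinearMap.transvection.apply, smul_add, smul_smul,
      smul_eq_mul, ContinuousLinearMap.coe_coe, innerSL_apply_apply]
    rw [← mul_assoc, mul_sub_one, mul_div_cancel₀ _ hρ.ne']
  have hdet : LinearMap.det L = A * ρ ^ (Module.finrank ℝ F - 1) := by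
    have : Nontrivial F := ⟨v, 0, norm_ne_zero_iff.1 (by simp [hv])⟩
    obtain ⟨k, hk⟩ := Nat.exists_eq_add_one.2 (Module.finrank_pos (R := ℝ) (M := F))
    simp only [L, Nat.add_sub_cancel, LinearMap.det_smul, hk, LinearMap.transvection.det,
      LinearMap.smul_apply, ContinuousLinearMap.coe_coe, innerSL_apply_apply,
      real_inner_self_eq_norm_sq, hv, smul_eq_mul]
    field_simp
    ring
  simp only [spheroid, hL]
  rw [← Set.image_image (fun w => c • v + w) L, Set.image_add_left, measure_preimage_add,
    Measure.addHaar_image_linearMap, hdet, abs_of_nonneg (by positivity)]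

lemma exists_coordinates_of_mem_spheroid (hv : ‖v‖ = 1) {c A ρ : ℝ} (hp : p ∈ spheroid v c A ρ) :
    ∃ t h : ℝ, |t| < 1 ∧ h ∈ Set.Icc 0 1 ∧ ⟪p, v⟫ = c + A * t ∧
      ‖p‖ ^ 2 = (c + A * t) ^ 2 + ρ ^ 2 * h := by
  obtain ⟨w, hw, rfl⟩ := hp
  rw [mem_ball_zero_iff] at hw
  have ht : |⟪v, w⟫| ≤ ‖w‖ := by simpa [hv] using abs_real_inner_le_norm v w
  have hsq : ⟪v, w⟫ ^ 2 ≤ ‖w‖ ^ 2 := sq_le_sq.2 (by rwa [abs_norm])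
  refine ⟨⟪v, w⟫, ‖w‖ ^ 2 - ⟪v, w⟫ ^ 2, ht.trans_lt hw, ⟨sub_nonneg.2 hsq, ?_⟩, ?_, ?_⟩
  · linarith [sq_nonneg ⟪v, w⟫, pow_le_one₀ (n := 2) (norm_nonneg w) hw.le]
  · simp only [inner_add_left, real_inner_smul_left, real_inner_self_eq_norm_sq, hv,
      real_inner_comm v w]
    ring
  · rw [← real_inner_self_eq_norm_sq (c • v + _)]
    simp only [inner_add_left, inner_add_right, real_inner_smul_left, real_inner_smul_right,
      real_inner_self_eq_norm_sq, norm_smul, mul_pow, Real.norm_eq_abs, sq_abs, hv,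
      real_inner_comm v w]
    ring

/-- A spheroid contained in the ball with diameter `[0, Z • v]` and disjoint from the ball of
radius `T < Z` about `0`; its semi-axes have the orders `Z - T` along `v` and `√(Z - T)` across. -/
def tipSpheroid (v : F) (T Z : ℝ) : Set F :=
  spheroid v (T + (Z - T) / 4) ((Z - T) / 4) √(T * (Z - T) / 2)

variable {T Z : ℝ}

lemma lt_norm_of_mem_tipSpheroid (hv : ‖v‖ = 1) (hTZ : T < Z) (hp : p ∈ tipSpheroid v T Z) :
    T < ‖p‖ := by
  obtain ⟨t, -, ht, -, hpv, -⟩ := exists_coordinates_of_mem_spheroid hv hp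
  have hle : ⟪p, v⟫ ≤ ‖p‖ := by simpa [hv] using real_inner_le_norm p v
  nlinarith [neg_lt_of_abs_lt ht]

lemma norm_sq_le_of_mem_tipSpheroid (hv : ‖v‖ = 1) (hT : 0 ≤ T) (hTZ : T < Z)
    (hp : p ∈ tipSpheroid v T Z) : ‖p‖ ^ 2 ≤ Z * ⟪p, v⟫ := by
  obtain ⟨t, h, ht, ⟨-, hh⟩, hpv, hnorm⟩ := exists_coordinates_of_mem_spheroid hv hp
  obtain ⟨ht₁, ht₂⟩ := abs_lt.1 ht
  have : 0 < Z - T := sub_pos.2 hTZ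
  set s := T + (Z - T) / 4 + (Z - T) / 4 * t with hs
  have hTs : T ≤ s := by nlinarith
  have hsZ : (Z - T) / 2 ≤ Z - s := by nlinarith
  rw [Real.sq_sqrt (by positivity)] at hnorm
  have hprod : T * ((Z - T) / 2) ≤ s * (Z - s) := mul_le_mul hTs hsZ (by linarith) (by linarith)
  have hρh : T * (Z - T) / 2 * h ≤ T * (Z - T) / 2 := mul_le_of_le_one_right (by positivity) hh
  rw [hpv, hnorm]
  linarith

lemma norm_le_of_mem_tipSpheroid (hv : ‖v‖ = 1) (hT : 0 ≤ T) (hTZ : T < Z)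
    (hp : p ∈ tipSpheroid v T Z) : ‖p‖ ≤ Z := by
  have hpos : 0 < ‖p‖ := hT.trans_lt (lt_norm_of_mem_tipSpheroid hv hTZ hp)
  have hle : ⟪p, v⟫ ≤ ‖p‖ := by simpa [hv] using real_inner_le_norm p v
  have hZ : Z * ⟪p, v⟫ ≤ Z * ‖p‖ := mul_le_mul_of_nonneg_left hle (hT.trans hTZ.le)
  exact le_of_mul_le_mul_right (by linarith [norm_sq_le_of_mem_tipSpheroid hv hT hTZ hp]) hpos

end Spheroid

section Caps

variable {d : ℕ} {e x y : Esp d} {K : Set (Esp d)} {r : ℝ}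

lemma mem_uSphere : x ∈ uSphere d ↔ ‖x‖ = 1 := mem_sphere_zero_iff_norm

lemma measurableSet_uSphere : MeasurableSet (uSphere d) := Metric.isClosed_sphere.measurableSet

lemma IsSphConvBody.subset_uSphere (hK : IsSphConvBody d K) : K ⊆ uSphere d := by
  obtain ⟨C, -, -, -, -, -, rfl⟩ := hK
  exact Set.inter_subset_right

lemma IsSphConvBody.isClosed (hK : IsSphConvBody d K) : IsClosed K := by
  obtain ⟨C, hC, -, -, -, -, rfl⟩ := hK
  exact hC.inter Metric.isClosed_sphere

lemma geo_eq_angle (hx : x ∈ uSphere d) (hy : y ∈ uSphere d) :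
    geo x y = InnerProductGeometry.angle x y := by
  rw [geo, InnerProductGeometry.angle, mem_uSphere.1 hx, mem_uSphere.1 hy, one_mul, div_one]

lemma isClosed_cap (e : Esp d) (r : ℝ) : IsClosed (cap e r) :=
  Metric.isClosed_sphere.inter
    (isClosed_le (f := fun x : Esp d => geo x e) (by unfold geo; fun_prop) continuous_const)

lemma hittingSet_cap_inter_uSphere_subset (he : e ∈ uSphere d) :
    hittingSet e (cap e r) ∩ uSphere d ⊆ cap e (2 * r) := by
  rintro x ⟨⟨y, ⟨hy, hyr⟩, hxy⟩, hx⟩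
  refine ⟨hx, ?_⟩
  rw [geo_eq_angle hy he] at hyr
  rw [geo_eq_angle hx he]
  linarith [angle_le_two_mul_angle_of_inner_sub_eq_zero
    ((mem_uSphere.1 hx).trans (mem_uSphere.1 he).symm) hxy]

lemma cap_eq_sphExp_image (he : e ∈ uSphere d) (hr : r < π) :
    cap e r = (fun p : (ℝ ∙ e)ᗮ => sphExp e p) '' Metric.closedBall 0 r := by
  have he' := mem_uSphere.1 he
  ext x
  constructor
  · rintro ⟨hx, hxr⟩
    have hxe : -1 < ⟪x, e⟫ := by
      by_contra! h
      exact hr.not_ge ((Real.arccos_of_le_neg_one h).symm.trans_le hxr)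
    obtain ⟨p, hpe, hp, rfl⟩ := exists_sphExp_eq he' (mem_uSphere.1 hx) hxe
    exact ⟨⟨p, Submodule.mem_orthogonal_singleton_iff_inner_left.2 hpe⟩,
      mem_closedBall_zero_iff.2 (hp.trans_le hxr), rfl⟩
  · rintro ⟨p, hp, rfl⟩
    have hpr : ‖(p : Esp d)‖ ≤ r := mem_closedBall_zero_iff.1 hp
    have hpe := Submodule.mem_orthogonal_singleton_iff_inner_left.1 p.2
    refine ⟨mem_uSphere.2 (norm_sphExp he' hpe), ?_⟩
    rwa [geo, inner_sphExp_self he' hpe, Real.arccos_cos (norm_nonneg _) (hpr.trans hr.le)]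

lemma finrank_orthogonal_span_of_mem_uSphere (he : e ∈ uSphere d) :
    Module.finrank ℝ (ℝ ∙ e)ᗮ = d :=
  have : Fact (Module.finrank ℝ (Esp d) = d + 1) := ⟨by simp⟩
  Submodule.finrank_orthogonal_span_singleton (ne_zero_of_mem_unit_sphere ⟨e, he⟩)

lemma isAddHaarMeasure_hausdorffMeasure_orthogonal (he : e ∈ uSphere d) :
    (μH[(d : ℝ)] : Measure (ℝ ∙ e)ᗮ).IsAddHaarMeasure := by
  have h := finrank_orthogonal_span_of_mem_uSphere he
  have := MeasureTheory.isAddHaarMeasure_hausdorffMeasure (E := (ℝ ∙ e)ᗮ)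
  rwa [h] at this

lemma hausdorffMeasure_cap_le (he : e ∈ uSphere d) (hr : 0 ≤ r) (hrπ : r < π) :
    μH[(d : ℝ)] (cap e r) ≤
      ENNReal.ofReal (r ^ d) * μH[(d : ℝ)] (Metric.ball (0 : (ℝ ∙ e)ᗮ) 1) := by
  have := isAddHaarMeasure_hausdorffMeasure_orthogonal he
  rw [cap_eq_sphExp_image he hrπ]
  refine (hausdorffMeasure_sphExp_image_le (mem_uSphere.1 he) d.cast_nonneg _).trans_eq ?_
  rw [Measure.addHaar_closedBall _ _ hr, finrank_orthogonal_span_of_mem_uSphere he]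

instance isFiniteMeasure_sigmaMeas (d : ℕ) : IsFiniteMeasure (sigmaMeas d) := by
  have hcap (e : Esp d) (he : e ∈ uSphere d) : μH[(d : ℝ)] (cap e (π / 2)) < ∞ := by
    have := isAddHaarMeasure_hausdorffMeasure_orthogonal he
    exact (hausdorffMeasure_cap_le he (by positivity) (by linarith [pi_pos])).trans_lt
      (ENNReal.mul_lt_top ENNReal.ofReal_lt_top measure_ball_lt_top)
  have he : EuclideanSpace.single 0 1 ∈ uSphere d := by simp [mem_uSphere]
  set e : Esp d := EuclideanSpace.single 0 1
  have hcover : uSphere d ⊆ cap e (π / 2) ∪ cap (-e) (π / 2) := fun x hx =>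
    (le_total 0 ⟪x, e⟫).imp (fun h => ⟨hx, arccos_le_pi_div_two.2 h⟩)
      fun h => ⟨hx, arccos_le_pi_div_two.2 (by rwa [inner_neg_right, neg_nonneg])⟩
  refine ⟨?_⟩
  rw [sigmaMeas, Measure.restrict_apply_univ]
  exact (measure_mono hcover).trans_lt ((measure_union_le _ _).trans_lt
    (ENNReal.add_lt_top.2 ⟨hcap e he, hcap (-e) (by simpa [mem_uSphere] using he)⟩))

lemma Utilde_cap_le (he : e ∈ uSphere d) (hr : 0 ≤ r) (hrπ : 2 * r < π) :
    Utilde d e (cap e r) ≤ (2 * r) ^ d * μH[(d : ℝ)].real (Metric.ball (0 : (ℝ ∙ e)ᗮ) 1) := by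
  have := isAddHaarMeasure_hausdorffMeasure_orthogonal he
  have hle : sigmaMeas d (hittingSet e (cap e r)) ≤
      ENNReal.ofReal ((2 * r) ^ d) * μH[(d : ℝ)] (Metric.ball (0 : (ℝ ∙ e)ᗮ) 1) := by
    rw [sigmaMeas, Measure.restrict_apply' measurableSet_uSphere]
    exact (measure_mono (hittingSet_cap_inter_uSphere_subset he)).trans
      (hausdorffMeasure_cap_le he (by positivity) hrπ)
  have hreal := ENNReal.toReal_mono
    (ENNReal.mul_ne_top ENNReal.ofReal_ne_top measure_ball_lt_top.ne) hle
  rwa [ENNReal.toReal_mul, ENNReal.toReal_ofReal (by positivity)] at hreal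

end Caps

section Radii

variable {d : ℕ} {e : Esp d} {K : Set (Esp d)}

lemma cap_subset_of_le_rcent (he : e ∈ uSphere d) (hK : IsClosed K) {a : ℝ} (ha : 0 < a)
    (haπ : a < π) (haK : a ≤ rcent d K e) : cap e a ⊆ K := by
  have hlt : ∀ r < a, cap e r ⊆ K := by
    intro r hr
    have hne : {r : ℝ | 0 ≤ r ∧ cap e r ⊆ K}.Nonempty := by
      by_contra h
      rw [rcent, Set.not_nonempty_iff_eq_empty.1 h, Real.sSup_empty] at haK
      linarith
    obtain ⟨r', ⟨-, hr'K⟩, hrr'⟩ := exists_lt_of_lt_csSup hne (hr.trans_le haK)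
    exact fun x hx => hr'K ⟨hx.1, hx.2.trans hrr'.le⟩
  rw [cap_eq_sphExp_image he haπ, ← closure_ball _ ha.ne', Set.image_subset_iff]
  refine closure_minimal (fun p hp => ?_) (hK.preimage (by fun_prop))
  have hpa : ‖p‖ < a := mem_ball_zero_iff.1 hp
  refine hlt ‖p‖ hpa ?_
  rw [cap_eq_sphExp_image he (hpa.trans haπ)]
  exact ⟨p, by simp, rfl⟩

lemma Rcent_le_pi_div_two (hKS : K ⊆ uSphere d) (hKe : ∀ x ∈ K, 0 ≤ ⟪x, e⟫) :
    Rcent d K e ≤ π / 2 :=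
  csInf_le ⟨0, fun _ h => h.1⟩
    ⟨by positivity, fun x hx => ⟨hKS hx, Real.arccos_le_pi_div_two.2 (hKe x hx)⟩⟩

lemma exists_mem_lt_geo (hKS : K ⊆ uSphere d) {R : ℝ} (hR : 0 ≤ R) (hRK : R < Rcent d K e) :
    ∃ y ∈ K, R < geo y e := by
  by_contra! h
  exact hRK.not_ge (csInf_le ⟨0, fun _ h => h.1⟩ ⟨hR, fun x hx => ⟨hKS hx, h x hx⟩⟩)

end Radii

section Stability

variable {d : ℕ} {e y : Esp d} {v : (ℝ ∙ e)ᗮ} {K C : Set (Esp d)} {a r : ℝ}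

lemma exists_unit_sphExp_smul_eq (he : e ∈ uSphere d) (hy : y ∈ uSphere d) (h₀ : 0 < geo y e)
    (hπ : geo y e < π) :
    ∃ v : (ℝ ∙ e)ᗮ, ‖v‖ = 1 ∧ sphExp e (geo y e • (v : Esp d)) = y := by
  obtain ⟨p, hpe, hp, hpy⟩ := exists_sphExp_eq (mem_uSphere.1 he) (mem_uSphere.1 hy)
    (by by_contra! h; exact hπ.not_ge (Real.arccos_of_le_neg_one h).ge)
  change ‖p‖ = geo y e at hp
  refine ⟨(geo y e)⁻¹ • ⟨p, Submodule.mem_orthogonal_singleton_iff_inner_left.2 hpe⟩, ?_, ?_⟩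
  · rw [norm_smul, Submodule.coe_norm, hp, Real.norm_of_nonneg (inv_nonneg.2 h₀.le),
      inv_mul_cancel₀ h₀.ne']
  · rw [Submodule.coe_smul, smul_inv_smul₀ h₀.ne', hpy]

/-- The factor `2 * cos r ^ 2 = 2 / (1 + tan r ^ 2)` is the conformal factor of `stereoInv` at norm
`tan r`, which is its minimum over `s`. -/
lemma mul_hausdorffMeasure_le_sigmaMeas_stereoInv_image (he : e ∈ uSphere d)
    (hr : Real.cos r ≠ 0) {s : Set (ℝ ∙ e)ᗮ} (hs : ∀ p ∈ s, ‖p‖ ≤ Real.tan r) :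
    (2 * Real.cos r ^ 2) ^ d * μH[(d : ℝ)].real s ≤
      (sigmaMeas d).real ((fun p : (ℝ ∙ e)ᗮ => stereoInv e p) '' s) := by
  have he' := mem_uSphere.1 he
  have hsphere : (fun p : (ℝ ∙ e)ᗮ => stereoInv e p) '' s ⊆ uSphere d := by
    rintro _ ⟨p, -, rfl⟩
    exact mem_uSphere.2
      (norm_stereoInv he' (Submodule.mem_orthogonal_singleton_iff_inner_left.1 p.2))
  have hdist := hausdorffMeasure_le_stereoInv_image he' d.cast_nonneg hs
  rw [← Measure.restrict_eq_self _ hsphere, ← sigmaMeas, ENNReal.rpow_natCast] at hdist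
  have hreal := ENNReal.toReal_mono (ENNReal.mul_ne_top
    (ENNReal.pow_ne_top ENNReal.ofReal_ne_top) (measure_ne_top _ _)) hdist
  rw [ENNReal.toReal_mul, ENNReal.toReal_pow, ENNReal.toReal_ofReal (by positivity)] at hreal
  refine (mul_le_mul_of_nonneg_left hreal (by positivity)).trans_eq ?_
  have hfactor : 2 * Real.cos r ^ 2 * ((1 + Real.tan r ^ 2) / 2) = 1 := by
    rw [← inv_inv (1 + Real.tan r ^ 2), inv_one_add_tan_sq hr]
    field_simp
  rw [← mul_assoc, ← mul_pow, hfactor, one_pow, one_mul, Measure.real]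

lemma hausdorffMeasure_real_tipSpheroid (he : e ∈ uSphere d) (hv : ‖v‖ = 1) {T Z : ℝ} (hT : 0 < T)
    (hTZ : T < Z) :
    μH[(d : ℝ)].real (tipSpheroid v T Z) =
      (Z - T) / 4 * √(T * (Z - T) / 2) ^ (d - 1) *
        μH[(d : ℝ)].real (Metric.ball (0 : (ℝ ∙ e)ᗮ) 1) := by
  have := isAddHaarMeasure_hausdorffMeasure_orthogonal he
  have : 0 < Z - T := sub_pos.2 hTZ
  rw [Measure.real, tipSpheroid, addHaar_spheroid _ hv _ (by positivity) (by positivity),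
    finrank_orthogonal_span_of_mem_uSphere he, ENNReal.toReal_mul,
    ENNReal.toReal_ofReal (by positivity), Measure.real]

lemma stereoInv_image_tipSpheroid_subset (hconv : Convex ℝ C)
    (hcone : ∀ x ∈ C, ∀ t : ℝ, 0 ≤ t → t • x ∈ C) (he : e ∈ uSphere d) (heC : e ∈ C)
    (hv : ‖v‖ = 1) (ha : 0 ≤ a) (har : a < r) (hr : r < π / 2) {θ : ℝ} (hrθ : r ≤ θ)
    (hθ : θ ≤ π / 2) (hC : sphExp e (θ • (v : Esp d)) ∈ C) :
    (fun p : (ℝ ∙ e)ᗮ => stereoInv e p) '' tipSpheroid v (tan a) (tan r) ⊆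
      (hittingSet e (C ∩ uSphere d) ∩ uSphere d) \ cap e (2 * a) := by
  rintro _ ⟨p, hp, rfl⟩
  have he' := mem_uSphere.1 he
  have hpe := Submodule.mem_orthogonal_singleton_iff_inner_left.1 p.2
  have hve := Submodule.mem_orthogonal_singleton_iff_inner_left.1 v.2
  have hθve : ⟪θ • (v : Esp d), e⟫ = 0 := by rw [real_inner_smul_left, hve, mul_zero]
  have htan : 0 ≤ Real.tan a := tan_nonneg_of_nonneg_of_le_pi_div_two ha (by linarith)
  have hlt : Real.tan a < Real.tan r := tan_lt_tan_of_lt_of_lt_pi_div_two (by linarith) hr har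
  have hnorm : ‖stereoInv e (p : Esp d)‖ = 1 := norm_stereoInv he' hpe
  have hTp : Real.tan a < ‖(p : Esp d)‖ := (lt_norm_of_mem_tipSpheroid hv hlt hp :)
  have hpZ : ‖(p : Esp d)‖ ^ 2 ≤ Real.tan r * ⟪(p : Esp d), v⟫ :=
    (norm_sq_le_of_mem_tipSpheroid hv htan hlt hp :)
  have hfar : 2 * a < geo (stereoInv e (p : Esp d)) e :=
    two_mul_lt_arccos_inner_stereoInv he' hpe ha (har.trans hr) hTp
  have hye : 0 ≤ ⟪sphExp e (θ • (v : Esp d)), e⟫ := by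
    rw [inner_sphExp_self he' hθve, norm_smul, Submodule.norm_coe, hv, mul_one,
      Real.norm_of_nonneg (by linarith)]
    exact cos_nonneg_of_mem_Icc ⟨by linarith, hθ⟩
  refine ⟨⟨mem_hittingSet_of_inner_nonneg hconv hcone heC he' hC (norm_sphExp he' hθve) hye ?_ ?_,
    mem_uSphere.2 hnorm⟩, fun h => hfar.not_ge h.2⟩
  · rw [inner_sub_left, real_inner_self_eq_norm_sq, he', one_pow, sub_nonpos]
    simpa [hnorm, he'] using real_inner_le_norm (stereoInv e (p : Esp d)) e
  · exact inner_stereoInv_sub_sphExp_nonneg he' hpe hv hve (ha.trans_lt har) hr hrθ hθ hpZ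

lemma Utilde_cap_add_le (he : e ∈ uSphere d) (hK : cap e a ⊆ K) {s : Set (Esp d)}
    (hs : s ⊆ (hittingSet e K ∩ uSphere d) \ cap e (2 * a)) :
    Utilde d e (cap e a) + (sigmaMeas d).real s ≤ Utilde d e K := by
  have hσ (t : Set (Esp d)) : (sigmaMeas d).real (t ∩ uSphere d) = (sigmaMeas d).real t := by
    rw [sigmaMeas, measureReal_restrict_apply' measurableSet_uSphere, Set.inter_assoc,
      Set.inter_self, measureReal_restrict_apply' measurableSet_uSphere]
  have hcap : hittingSet e (cap e a) ∩ uSphere d ⊆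
      (hittingSet e K ∩ uSphere d) ∩ cap e (2 * a) := fun x hx =>
    ⟨⟨hittingSet_mono hK hx.1, hx.2⟩, hittingSet_cap_inter_uSphere_subset he hx⟩
  calc Utilde d e (cap e a) + (sigmaMeas d).real s
      = (sigmaMeas d).real (hittingSet e (cap e a) ∩ uSphere d) + (sigmaMeas d).real s := by
        rw [hσ]; rfl
    _ ≤ (sigmaMeas d).real ((hittingSet e K ∩ uSphere d) ∩ cap e (2 * a)) +
          (sigmaMeas d).real ((hittingSet e K ∩ uSphere d) \ cap e (2 * a)) :=
        add_le_add (measureReal_mono hcap) (measureReal_mono hs)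
    _ = Utilde d e K := by
        rw [measureReal_inter_add_sdiff (isClosed_cap e _).measurableSet, hσ]; rfl

lemma Utilde_cap_add_mul_le (hK : IsSphConvBody d K) (he : e ∈ uSphere d) (ha : 0 < a)
    (haK : cap e a ⊆ K) (har : a < r) (hr : r < π / 2) (hyK : y ∈ K) (hry : r ≤ geo y e)
    (hye : geo y e ≤ π / 2) :
    Utilde d e (cap e a) + (2 * Real.cos r ^ 2) ^ d *
      ((tan r - tan a) / 4 * √(tan a * (tan r - tan a) / 2) ^ (d - 1) *
        μH[(d : ℝ)].real (Metric.ball (0 : (ℝ ∙ e)ᗮ) 1)) ≤ Utilde d e K := by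
  obtain ⟨C, -, hconv, hcone, -, -, rfl⟩ := hK
  have heK : e ∈ cap e a :=
    ⟨he, by simpa [geo, mem_uSphere.1 he] using ha.le⟩
  have htan : 0 < Real.tan a := tan_pos_of_pos_of_lt_pi_div_two ha (by linarith)
  have hlt : Real.tan a < Real.tan r := tan_lt_tan_of_lt_of_lt_pi_div_two (by linarith) hr har
  obtain ⟨v, hv, hvy⟩ := exists_unit_sphExp_smul_eq he hyK.2 (by linarith) (by linarith [pi_pos])
  rw [← hausdorffMeasure_real_tipSpheroid he hv htan hlt]
  refine le_trans (add_le_add_right (mul_hausdorffMeasure_le_sigmaMeas_stereoInv_image he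
    (cos_pos_of_mem_Ioo ⟨by linarith, hr⟩).ne'
    fun p hp => norm_le_of_mem_tipSpheroid hv htan.le hlt hp) _) ?_
  exact Utilde_cap_add_le he haK (stereoInv_image_tipSpheroid_subset hconv hcone he (haK heK).1 hv
    ha.le har hr hry hye (hvy.symm ▸ hyK.1))

end Stability

section Trigonometry

variable {a δ ε : ℝ}

lemma two_div_pi_mul_min_le_sin_mul_cos (ha : 0 ≤ a) (ha' : a ≤ π / 2) :
    2 / π * min a (π / 2 - a) ≤ Real.sin a * Real.cos a := by
  have hsin : Real.sin (2 * min a (π / 2 - a)) = 2 * Real.sin a * Real.cos a := by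
    rcases min_choice a (π / 2 - a) with h | h
    · rw [h, Real.sin_two_mul]
    · rw [h, ← Real.sin_two_mul, mul_sub, mul_div_cancel₀ _ two_ne_zero, Real.sin_pi_sub]
  have hjordan := Real.mul_le_sin (x := 2 * min a (π / 2 - a))
    (mul_nonneg zero_le_two (le_min ha (sub_nonneg.2 ha')))
    (by linarith [min_le_left a (π / 2 - a), min_le_right a (π / 2 - a)])
  linarith

lemma half_cos_le_cos_add (ha : 0 ≤ a) (hδ : 0 ≤ δ) (hδa : 2 * δ ≤ π / 2 - a) :
    Real.cos a / 2 ≤ Real.cos (a + δ) := by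
  have hconc : (1 / 2 : ℝ) • Real.cos a + (1 / 2 : ℝ) • Real.cos (π / 2) ≤
      Real.cos ((1 / 2 : ℝ) • a + (1 / 2 : ℝ) • (π / 2)) :=
    strictConcaveOn_cos_Icc.concaveOn.right ⟨by linarith, by linarith⟩ ⟨by linarith, le_rfl⟩
      (by norm_num) (by norm_num) (by norm_num)
  simp only [smul_eq_mul, Real.cos_pi_div_two, mul_zero, add_zero] at hconc
  have hmono : Real.cos (1 / 2 * a + 1 / 2 * (π / 2)) ≤ Real.cos (a + δ) :=
    cos_le_cos_of_nonneg_of_le_pi (by linarith) (by linarith [pi_pos]) (by linarith)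
  linarith

lemma div_pi_le_cos_sq_mul_tan_sub_tan (ha : 0 ≤ a) (ha' : a < π / 2) (hδ : 0 ≤ δ)
    (hδa : 2 * δ ≤ π / 2 - a) :
    δ / π ≤ Real.cos (a + δ) ^ 2 * (Real.tan (a + δ) - Real.tan a) := by
  have hcos : 0 < Real.cos a := cos_pos_of_mem_Ioo ⟨by linarith, ha'⟩
  have hhalf := half_cos_le_cos_add ha hδ hδa
  have hcos' : 0 < Real.cos (a + δ) := by linarith
  have hδπ : 2 / π * δ ≤ Real.sin δ := Real.mul_le_sin hδ (by linarith)
  have hsin : Real.sin δ = Real.cos (a + δ) * Real.cos a * (Real.tan (a + δ) - Real.tan a) := by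
    rw [Real.tan_eq_sin_div_cos, Real.tan_eq_sin_div_cos]
    field_simp
    rw [mul_comm (Real.cos a), ← Real.sin_sub, add_sub_cancel_left]
  have hdiff : 0 ≤ Real.tan (a + δ) - Real.tan a :=
    nonneg_of_mul_nonneg_right (hsin ▸ sin_nonneg_of_nonneg_of_le_pi hδ (by linarith))
      (by positivity)
  calc δ / π = 2 / π * δ / 2 := by ring
    _ ≤ Real.sin δ / 2 := by gcongr
    _ = Real.cos a / 2 * (Real.cos (a + δ) * (Real.tan (a + δ) - Real.tan a)) := by
        rw [hsin]; ring
    _ ≤ Real.cos (a + δ) * (Real.cos (a + δ) * (Real.tan (a + δ) - Real.tan a)) := by gcongr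
    _ = _ := by ring

lemma min_div_two_mul_pi_le_cos_sq_mul_tan (ha : 0 ≤ a) (ha' : a < π / 2) (hδ : 0 ≤ δ)
    (hδa : 2 * δ ≤ π / 2 - a) :
    min a (π / 2 - a) / (2 * π) ≤ Real.cos (a + δ) ^ 2 * Real.tan a := by
  have hcos : 0 < Real.cos a := cos_pos_of_mem_Ioo ⟨by linarith, ha'⟩
  have htan : 0 ≤ Real.tan a := tan_nonneg_of_nonneg_of_le_pi_div_two ha ha'.le
  calc min a (π / 2 - a) / (2 * π) = 2 / π * min a (π / 2 - a) / 4 := by ring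
    _ ≤ Real.sin a * Real.cos a / 4 :=
        div_le_div_of_nonneg_right (two_div_pi_mul_min_le_sin_mul_cos ha ha'.le) zero_le_four
    _ = (Real.cos a / 2) ^ 2 * Real.tan a := by
        rw [← tan_mul_cos hcos.ne']
        ring
    _ ≤ Real.cos (a + δ) ^ 2 * Real.tan a := by
        gcongr
        exact half_cos_le_cos_add ha hδ hδa

lemma mul_sqrt_le_cos_sq_mul_sqrt_tan (ha : 0 < a) (ha' : a < π / 2) (hε : 0 ≤ ε)
    (hεa : ε ≤ π / 2 - a) :
    min a (π / 2 - a) * √ε / (2 * π) ≤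
      2 * Real.cos (a + ε / 2) ^ 2 *
        √(Real.tan a * (Real.tan (a + ε / 2) - Real.tan a) / 2) := by
  have hT := min_div_two_mul_pi_le_cos_sq_mul_tan ha.le ha' (δ := ε / 2) (by positivity)
    (by linarith)
  have hD := div_pi_le_cos_sq_mul_tan_sub_tan ha.le ha' (δ := ε / 2) (by positivity)
    (by linarith)
  have hm : 0 < min a (π / 2 - a) := lt_min ha (sub_pos.2 ha')
  have hm₂ : min a (π / 2 - a) ≤ 2 := by linarith [min_le_right a (π / 2 - a), pi_lt_four]
  have htan : 0 < Real.tan a := tan_pos_of_pos_of_lt_pi_div_two ha ha'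
  have hcos : 0 ≤ Real.cos (a + ε / 2) ^ 2 := sq_nonneg _
  set m := min a (π / 2 - a)
  set Q := Real.cos (a + ε / 2) ^ 2
  set D := Real.tan (a + ε / 2) - Real.tan a
  have hsq : (m * √ε / (2 * π)) ^ 2 ≤ (2 * Q) ^ 2 * (Real.tan a * D / 2) :=
    calc (m * √ε / (2 * π)) ^ 2 = m * (m / (2 * π)) * (ε / 2 / π) := by
          rw [div_pow, mul_pow, Real.sq_sqrt hε]
          field_simp
      _ ≤ 2 * (Q * Real.tan a) * (Q * D) := by gcongr
      _ = _ := by ring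
  have hroot := Real.le_sqrt_of_sq_le hsq
  rwa [Real.sqrt_mul (sq_nonneg _), Real.sqrt_sq (mul_nonneg zero_le_two hcos)] at hroot

lemma rpow_add_one_div_two_eq_mul_sqrt_pow (hε : 0 < ε) (k : ℕ) :
    ε ^ (((k + 1 : ℕ) + 1 : ℝ) / 2) = ε * √ε ^ k := by
  rw [Real.sqrt_eq_rpow, ← Real.rpow_mul_natCast hε.le, ← Real.rpow_one_add' hε.le (by positivity)]
  congr 1
  push_cast
  ring

lemma stability_constant_mul_le {d : ℕ} (hd : 1 ≤ d) (ha : 0 < a) (ha' : a < π / 2) (hε : 0 < ε)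
    (hεa : ε ≤ π / 2 - a) :
    ((2 * π) ^ (2 * d))⁻¹ * a⁻¹ * (min a (π / 2 - a)) ^ (d - 1) * ε ^ (((d : ℝ) + 1) / 2) *
        (2 * a) ^ d ≤
      (2 * Real.cos (a + ε / 2) ^ 2) ^ d * ((Real.tan (a + ε / 2) - Real.tan a) / 4 *
        √(Real.tan a * (Real.tan (a + ε / 2) - Real.tan a) / 2) ^ (d - 1)) := by
  obtain ⟨k, rfl⟩ := Nat.exists_eq_add_of_le' hd
  have hm : 0 < min a (π / 2 - a) := lt_min ha (sub_pos.2 ha')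
  have haxial := div_pi_le_cos_sq_mul_tan_sub_tan ha.le ha' (δ := ε / 2) (by positivity)
    (by linarith)
  have hradial := mul_sqrt_le_cos_sq_mul_sqrt_tan ha ha' hε.le hεa
  rw [rpow_add_one_div_two_eq_mul_sqrt_pow hε, Nat.add_sub_cancel]
  set m := min a (π / 2 - a)
  set g := 2 * Real.cos (a + ε / 2) ^ 2 with hg
  set D := Real.tan (a + ε / 2) - Real.tan a
  have haxial' : ε / (4 * π) ≤ g * (D / 4) :=
    calc ε / (4 * π) = ε / 2 / π / 2 := by ring
      _ ≤ Real.cos (a + ε / 2) ^ 2 * D / 2 := by gcongr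
      _ = g * (D / 4) := by rw [hg]; ring
  have hconst : 8 * π * (2 * a) ^ k ≤ (2 * π) ^ (k + 2) :=
    calc 8 * π * (2 * a) ^ k ≤ (2 * π) ^ 2 * (2 * π) ^ k := by
          gcongr
          · nlinarith [pi_gt_three]
          · linarith
      _ = (2 * π) ^ (k + 2) := by ring
  calc ((2 * π) ^ (2 * (k + 1)))⁻¹ * a⁻¹ * m ^ k * (ε * √ε ^ k) * (2 * a) ^ (k + 1)
      = ε / (4 * π) * (m * √ε / (2 * π)) ^ k * (8 * π * (2 * a) ^ k / (2 * π) ^ (k + 2)) := by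
        rw [div_pow, show (2 * π) ^ (2 * (k + 1)) = (2 * π) ^ k * (2 * π) ^ (k + 2) by ring]
        field_simp
        ring
    _ ≤ ε / (4 * π) * (m * √ε / (2 * π)) ^ k :=
        mul_le_of_le_one_right (by positivity) (div_le_one_of_le₀ hconst (by positivity))
    _ ≤ g * (D / 4) * (g * √(Real.tan a * D / 2)) ^ k :=
        mul_le_mul haxial' (pow_le_pow_left₀ (by positivity) hradial k) (by positivity)
          ((by positivity : 0 ≤ ε / (4 * π)).trans haxial')
    _ = _ := by rw [mul_pow]; ring

end Trigonometry

theorem statement4_general {d : ℕ} (hd : 1 ≤ d) {a ε : ℝ} (ha : 0 < a) (hε : 0 < ε) {e : Esp d}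
    (he : e ∈ uSphere d) {K : Set (Esp d)} (hK : IsSphConvBody d K) (hKe : ∀ x ∈ K, 0 ≤ ⟪x, e⟫)
    (har : a ≤ rcent d K e) (hRr : ε ≤ Rcent d K e - rcent d K e) :
    (1 + ((2 * π) ^ (2 * d))⁻¹ * a⁻¹ * (min a (π / 2 - a)) ^ (d - 1) *
        ε ^ (((d : ℝ) + 1) / 2)) * Utilde d e (cap e a) ≤ Utilde d e K := by
  have hKS : K ⊆ uSphere d := hK.subset_uSphere
  have hR : Rcent d K e ≤ π / 2 := Rcent_le_pi_div_two hKS hKe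
  have hcap : cap e a ⊆ K :=
    cap_subset_of_le_rcent he hK.isClosed ha (by linarith [pi_pos]) har
  obtain ⟨y, hyK, hy⟩ : ∃ y ∈ K, a + ε / 2 < geo y e :=
    exists_mem_lt_geo hKS (by positivity) (by linarith)
  have hye : geo y e ≤ π / 2 := arccos_le_pi_div_two.2 (hKe y hyK)
  have hgain := Utilde_cap_add_mul_le hK he ha hcap (r := a + ε / 2) (by linarith) (by linarith)
    hyK hy.le hye
  have hconst := stability_constant_mul_le hd ha (by linarith) hε (by linarith)
  have hball := Utilde_cap_le he ha.le (by linarith)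
  have hm : 0 ≤ min a (π / 2 - a) := le_min ha.le (by linarith)
  set c := ((2 * π) ^ (2 * d))⁻¹ * a⁻¹ * (min a (π / 2 - a)) ^ (d - 1)
  set κ := μH[(d : ℝ)].real (Metric.ball (0 : (ℝ ∙ e)ᗮ) 1)
  calc (1 + c * ε ^ (((d : ℝ) + 1) / 2)) * Utilde d e (cap e a)
      = Utilde d e (cap e a) + c * ε ^ (((d : ℝ) + 1) / 2) * Utilde d e (cap e a) := by ring
    _ ≤ Utilde d e (cap e a) + c * ε ^ (((d : ℝ) + 1) / 2) * ((2 * a) ^ d * κ) := by gcongr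
    _ ≤ Utilde d e K := by
      refine le_trans ?_ hgain
      rw [← mul_assoc, ← mul_assoc]
      gcongr

/-- Theorem D, second part / Theorem 4.6. Stability for `Ũ_e`:
there is `c(a,d)` bounded below explicitly such that every `K ∈ 𝒦̄_s^d` with
`e ∈ K ⊆ H_e^+`, `r_e(K) ≥ a` and `R_e(K) - r_e(K) ≥ ε` satisfies
`Ũ_e(K) ≥ (1 + c(a,d) ε^{(d+1)/2}) Ũ_e(B(e,a))`. -/
theorem statement4 (d : ℕ) (hd : 2 ≤ d) (a : ℝ) (ha : 0 < a) (ha' : a < π / 2) :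
    ∃ c : ℝ, ((2 * π) ^ (2 * d))⁻¹ * a⁻¹ * (min a (π / 2 - a)) ^ (d - 1) ≤ c ∧
      ∀ (e : Esp d) (ε : ℝ) (K : Set (Esp d)), e ∈ uSphere d →
        0 < ε → ε ≤ 1 → IsSphConvBody d K → e ∈ K → (∀ x ∈ K, 0 ≤ ⟪x, e⟫) →
        a ≤ rcent d K e → ε ≤ Rcent d K e - rcent d K e →
        Utilde d e K ≥ (1 + c * ε ^ (((d : ℝ) + 1) / 2)) * Utilde d e (cap e a) := by
  refine ⟨_, le_rfl, fun e ε K he hε _ hK _ hKe har hRr => ?_⟩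
  exact statement4_general (one_le_two.trans hd) ha hε he hK hKe har hRr

end
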